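/- Let q ≥ 1 be a real number. Then lim_{N→∞} (1/(2^N · N^{q/2})) · Σ_{j=0}^{N} C(N, j)·|N − 2j|^q = 2^{q/2}·Γ((q+1)/2)/√π, where C(N,j) is the binomial coefficient and Γ is the Gamma function. -/

import Mathlib

open MeasureTheory ProbabilityTheory Filter Topology

/-- Law of the rescaled magnetization. -/
noncomputable def magLaw (N : ℕ) : Measure ℝ :=
  ∑ j ∈ Finset.range (N + 1), ENNReal.ofReal ((N.choose j : ℝ) / 2 ^ N) •
    Measure.dirac ((√(N : ℝ))⁻¹ * ((N : ℝ) - 2 * (j : ℝ)))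

lemma magLaw_integrable {E : Type*} [NormedAddCommGroup E] (N : ℕ) (f : ℝ → E) :
    Integrable f (magLaw N) := by
  unfold magLaw
  refine integrable_finsetSum_measure.2 fun j _ => ?_
  exact (integrable_dirac (by simp)).smul_measure ENNReal.ofReal_ne_top

lemma magLaw_integral {E : Type*} [NormedAddCommGroup E] [NormedSpace ℝ E] [CompleteSpace E]
    (N : ℕ) (f : ℝ → E) :
    ∫ x, f x ∂(magLaw N) = ∑ j ∈ Finset.range (N + 1), ((N.choose j : ℝ) / 2 ^ N) •
      f ((√(N : ℝ))⁻¹ * ((N : ℝ) - 2 * (j : ℝ))) := by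
  have h := magLaw_integrable N f
  unfold magLaw at h ⊢
  rw [integral_finsetSum_measure (integrable_finsetSum_measure.1 h)]
  refine Finset.sum_congr rfl fun j _ => ?_
  rw [integral_smul_measure, integral_dirac, ENNReal.toReal_ofReal (by positivity)]

instance magLaw_prob (N : ℕ) : IsProbabilityMeasure (magLaw N) := by
  constructor
  unfold magLaw
  simp only [Measure.coe_finsetSum, Finset.sum_apply, Measure.smul_apply, measure_univ,
    smul_eq_mul, mul_one]
  rw [← ENNReal.ofReal_sum_of_nonneg (fun j _ => by positivity), ← Finset.sum_div]
  have : ∑ j ∈ Finset.range (N + 1), (N.choose j : ℝ) = 2 ^ N := by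
    exact_mod_cast Nat.sum_range_choose N
  rw [this, div_self (by positivity), ENNReal.ofReal_one]

lemma magLaw_sum_exp (N : ℕ) (z : ℂ) :
    ∑ j ∈ Finset.range (N + 1), ((N.choose j : ℂ) / 2 ^ N) *
      Complex.exp (z * ((N : ℂ) - 2 * (j : ℂ))) = Complex.cosh z ^ N := by
  rw [Complex.cosh, div_pow, add_comm (Complex.exp z), add_pow, Finset.sum_div]
  refine Finset.sum_congr rfl fun j hj => ?_
  have hj' : j ≤ N := Nat.lt_succ_iff.1 (Finset.mem_range.1 hj)
  rw [← Complex.exp_nat_mul, ← Complex.exp_nat_mul, ← Complex.exp_add, Nat.cast_sub hj']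
  have : (j : ℂ) * -z + ((N : ℂ) - j) * z = z * ((N : ℂ) - 2 * (j : ℂ)) := by ring
  rw [this]
  ring

lemma magLaw_charFun (N : ℕ) (t : ℝ) :
    charFun (magLaw N) t = Complex.cos (((√(N : ℝ))⁻¹ * t : ℝ)) ^ N := by
  rw [charFun_apply_real, magLaw_integral, ← Complex.cosh_mul_I, ← magLaw_sum_exp]
  refine Finset.sum_congr rfl fun j hj => ?_
  rw [Complex.real_smul]
  push_cast
  congr 2
  ring

lemma magLaw_exp (N : ℕ) (t : ℝ) :
    ∫ x, Real.exp (t * x) ∂(magLaw N) = Real.cosh ((√(N : ℝ))⁻¹ * t) ^ N := by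
  rw [magLaw_integral]
  apply Complex.ofReal_injective
  push_cast
  rw [← magLaw_sum_exp]
  refine Finset.sum_congr rfl fun j hj => ?_
  rw [smul_eq_mul]
  push_cast
  congr 2
  ring

lemma magLaw_exp_le (N : ℕ) (t : ℝ) :
    ∫ x, Real.exp (t * x) ∂(magLaw N) ≤ Real.exp (t ^ 2 / 2) := by
  rw [magLaw_exp]
  rcases Nat.eq_zero_or_pos N with rfl | hN
  · simp; positivity
  have hN' : (0 : ℝ) < N := by exact_mod_cast hN
  refine (pow_le_pow_left₀ (Real.cosh_pos _).le (Real.cosh_le_exp_half_sq _) N).trans ?_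
  rw [← Real.exp_nat_mul]
  apply le_of_eq
  congr 1
  rw [mul_pow, inv_pow, Real.sq_sqrt hN'.le]
  field_simp

/-- The law as a bundled probability measure. -/
noncomputable def magPM (N : ℕ) : ProbabilityMeasure ℝ := ⟨magLaw N, magLaw_prob N⟩

/-- The standard Gaussian as a bundled probability measure. -/
noncomputable def gaussPM : ProbabilityMeasure ℝ := ⟨gaussianReal 0 1, inferInstance⟩

lemma magLaw_tendsto : Tendsto magPM atTop (𝓝 gaussPM) := by
  refine ProbabilityMeasure.tendsto_of_tendsto_charFun fun t => ?_
  have key := tendsto_charFun_inv_sqrt_mul_pow (P := magLaw 1) (X := id) aemeasurable_id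
    (by simp [magLaw_integral, Finset.sum_range_succ]; norm_num)
    (by simp [magLaw_integral, Finset.sum_range_succ]; norm_num) t
  simp only [Measure.map_id] at key
  have h2 : charFun (gaussianReal 0 1) t = Complex.exp (- t ^ 2 / 2) := by
    simp [charFun_gaussianReal, neg_div]
  change Tendsto (fun N => charFun (magLaw N) t) atTop (𝓝 (charFun (gaussianReal 0 1) t))
  rw [h2]
  refine key.congr fun N => ?_
  rw [magLaw_charFun, magLaw_charFun]
  simp

lemma trunc_bound {q K : ℝ} (hq : 1 ≤ q) (hK : 0 < K) (x : ℝ) :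
    |(|x| ^ q - (min |x| K) ^ q)| ≤
      (q + 1) ^ (q + 1) / K * (Real.exp (1 * x) + Real.exp (-1 * x)) := by
  have h0 : 0 ≤ min |x| K := le_min (abs_nonneg _) hK.le
  have h1 : (min |x| K) ^ q ≤ |x| ^ q :=
    Real.rpow_le_rpow h0 (min_le_left _ _) (by linarith)
  rw [abs_of_nonneg (by linarith)]
  have hexp : |x| ^ (q + 1) ≤ (q + 1) ^ (q + 1) * (Real.exp (1 * x) + Real.exp (-1 * x)) := by
    have := rpow_abs_le_mul_exp_abs x (t := 1) (p := q + 1) (by linarith) one_ne_zero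
    simp only [abs_one, div_one, one_mul] at this
    refine this.trans ?_
    gcongr
    rcases abs_cases x with ⟨h, _⟩ | ⟨h, _⟩ <;> rw [h] <;> simp <;> positivity
  have hpos : 0 ≤ (q + 1) ^ (q + 1) * (Real.exp (1 * x) + Real.exp (-1 * x)) := by positivity
  rw [div_mul_eq_mul_div, le_div_iff₀ hK]
  rcases le_total |x| K with h | h
  · rw [min_eq_left h]; simpa using hpos
  · refine le_trans ?_ hexp
    have hx : 0 < |x| := lt_of_lt_of_le hK h
    rw [Real.rpow_add hx, Real.rpow_one]
    have h3 : 0 ≤ (min |x| K) ^ q := Real.rpow_nonneg h0 _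
    have h4 : 0 ≤ |x| ^ q := by positivity
    nlinarith

lemma trunc_integral {q K : ℝ} (hq : 1 ≤ q) (hK : 0 < K) (μ : Measure ℝ) [IsProbabilityMeasure μ]
    (h1 : Integrable (fun x => Real.exp (1 * x)) μ) (h2 : Integrable (fun x => Real.exp (-1 * x)) μ)
    (b1 : ∫ x, Real.exp (1 * x) ∂μ ≤ Real.exp (1 / 2))
    (b2 : ∫ x, Real.exp (-1 * x) ∂μ ≤ Real.exp (1 / 2)) :
    |∫ x, |x| ^ q ∂μ - ∫ x, (min |x| K) ^ q ∂μ| ≤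
      2 * (q + 1) ^ (q + 1) * Real.exp (1 / 2) / K := by
  have i1 : Integrable (fun x : ℝ => |x| ^ q) μ :=
    integrable_rpow_abs_of_integrable_exp_mul (X := fun x => x) one_ne_zero h1 h2 (by linarith)
  have i2 : Integrable (fun x : ℝ => (min |x| K) ^ q) μ := by
    refine i1.mono' (Measurable.aestronglyMeasurable (by fun_prop)) (ae_of_all _ fun x => ?_)
    have h0 : 0 ≤ min |x| K := le_min (abs_nonneg _) hK.le
    rw [Real.norm_of_nonneg (Real.rpow_nonneg h0 _)]
    exact Real.rpow_le_rpow h0 (min_le_left _ _) (by linarith)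
  rw [← integral_sub i1 i2]
  refine abs_integral_le_integral_abs.trans ?_
  refine (integral_mono (i1.sub i2).abs ((h1.add h2).const_mul _) (trunc_bound hq hK)).trans ?_
  simp only [Pi.add_apply]
  rw [integral_const_mul, integral_add h1 h2]
  calc _ ≤ (q + 1) ^ (q + 1) / K * (Real.exp (1 / 2) + Real.exp (1 / 2)) := by gcongr
    _ = _ := by ring

lemma trunc_tendsto {q K : ℝ} (hq : 1 ≤ q) (hK : 0 < K) :
    Tendsto (fun N => ∫ x, (min |x| K) ^ q ∂(magLaw N)) atTop
      (𝓝 (∫ x, (min |x| K) ^ q ∂(gaussianReal 0 1))) := by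
  have hc : Continuous (fun x : ℝ => (min |x| K) ^ q) :=
    Continuous.rpow_const (by fun_prop) (fun x => Or.inr (by linarith))
  have := ProbabilityMeasure.tendsto_iff_forall_integral_tendsto.1 magLaw_tendsto
    (BoundedContinuousFunction.ofNormedAddCommGroup _ hc (K ^ q) (fun x => by
      have h0 : 0 ≤ min |x| K := le_min (abs_nonneg _) hK.le
      rw [Real.norm_of_nonneg (Real.rpow_nonneg h0 _)]
      exact Real.rpow_le_rpow h0 (min_le_right _ _) (by linarith)))
  exact this

lemma gauss_exp (t : ℝ) : ∫ x, Real.exp (t * x) ∂(gaussianReal 0 1) = Real.exp (t ^ 2 / 2) := by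
  have := mgf_gaussianReal (p := gaussianReal 0 1) (X := id) (μ := 0) (v := 1) (by simp) t
  simpa [mgf] using this

lemma moment_tendsto {q : ℝ} (hq : 1 ≤ q) :
    Tendsto (fun N => ∫ x, |x| ^ q ∂(magLaw N)) atTop (𝓝 (∫ x, |x| ^ q ∂(gaussianReal 0 1))) := by
  rw [Metric.tendsto_atTop]
  intro ε hε
  set A := 2 * (q + 1) ^ (q + 1) * Real.exp (1 / 2) with hA
  have hApos : 0 < A := by positivity
  set K := 4 * A / ε with hKdef
  have hK : 0 < K := by positivity
  have hAK : A / K = ε / 4 := by rw [hKdef]; field_simp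
  obtain ⟨N0, hN0⟩ := Metric.tendsto_atTop.1 (trunc_tendsto hq hK) (ε / 4) (by positivity)
  refine ⟨N0, fun N hN => ?_⟩
  have a1 := trunc_integral hq hK (magLaw N) (magLaw_integrable _ _) (magLaw_integrable _ _)
    (by simpa using magLaw_exp_le N 1) (by simpa using magLaw_exp_le N (-1))
  have a2 := trunc_integral hq hK (gaussianReal 0 1) (integrable_exp_mul_gaussianReal _)
    (integrable_exp_mul_gaussianReal _) (by rw [gauss_exp]; simp) (by rw [gauss_exp]; simp)
  have a3 := hN0 N hN
  rw [← hA, hAK] at a1 a2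
  rw [Real.dist_eq] at a3 ⊢
  rw [abs_le] at a1 a2
  rw [abs_lt] at a3 ⊢
  constructor <;> linarith [a1.1, a1.2, a2.1, a2.2, a3.1, a3.2]

lemma gauss_moment {q : ℝ} (hq : 1 ≤ q) : ∫ x, |x| ^ q ∂(gaussianReal 0 1) =
    (2 : ℝ) ^ (q / 2) * Real.Gamma ((q + 1) / 2) / Real.sqrt Real.pi := by
  rw [integral_gaussianReal_eq_integral_smul one_ne_zero]
  have e : ∀ x : ℝ, gaussianPDFReal 0 1 x • |x| ^ q =
      (fun y : ℝ => (√(2 * Real.pi))⁻¹ * (y ^ q * Real.exp (-(1 / 2) * y ^ (2 : ℝ)))) |x| := by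
    intro x
    simp only [gaussianPDFReal, smul_eq_mul, Real.rpow_two, sq_abs, NNReal.coe_one, sub_zero,
      mul_one]
    rw [show -x ^ 2 / 2 = -(1 / 2) * x ^ 2 by ring]
    ring
  rw [integral_congr_ae (ae_of_all _ e)]
  rw [integral_comp_abs (f := fun y : ℝ =>
    (√(2 * Real.pi))⁻¹ * (y ^ q * Real.exp (-(1 / 2) * y ^ (2 : ℝ))))]
  rw [integral_const_mul,
    integral_rpow_mul_exp_neg_mul_rpow two_pos (by linarith) (by norm_num)]
  have h : ((1 : ℝ) / 2) ^ (-(q + 1) / 2) = 2 ^ (q / 2) * √2 := by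
    rw [one_div, Real.inv_rpow two_pos.le, ← Real.rpow_neg two_pos.le, Real.sqrt_eq_rpow,
      ← Real.rpow_add two_pos]
    congr 1; ring
  rw [h, Real.sqrt_mul two_pos.le]
  field_simp

/-- Asymptotics of the Schatten `q`-norm of the total magnetization on `N` spin-1/2
sites: for `q ≥ 1`,
`lim_{N→∞} (1/(2^N N^{q/2})) Σ_{j=0}^{N} C(N,j)|N−2j|^q = 2^{q/2} Γ((q+1)/2)/√π`. -/
theorem stmt19 (q : ℝ) (hq : 1 ≤ q) :
    Filter.Tendsto (fun N : ℕ =>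
        (1 / ((2 : ℝ) ^ N * (N : ℝ) ^ (q / 2))) *
          ∑ j ∈ Finset.range (N + 1), (N.choose j : ℝ) * |(N : ℝ) - 2 * (j : ℝ)| ^ q)
      Filter.atTop
      (nhds ((2 : ℝ) ^ (q / 2) * Real.Gamma ((q + 1) / 2) / Real.sqrt Real.pi)) := by
  rw [← gauss_moment hq]
  refine (moment_tendsto hq).congr fun N => ?_
  rw [magLaw_integral, Finset.mul_sum]
  refine Finset.sum_congr rfl fun j _ => ?_
  have hs : (√(N : ℝ)) ^ q = (N : ℝ) ^ (q / 2) := by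
    rw [Real.sqrt_eq_rpow, ← Real.rpow_mul (Nat.cast_nonneg N)]
    congr 1; ring
  rw [smul_eq_mul, abs_mul, Real.mul_rpow (abs_nonneg _) (abs_nonneg _),
    abs_of_nonneg (by positivity), Real.inv_rpow (Real.sqrt_nonneg _), hs]
  simp only [mul_inv, div_eq_mul_inv]
  ring
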